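/- For every complex number q with |q| < 1 and every complex number x, the identity 1 + 2·∑_{n=1}^∞ T_{2n}(x/2)·q^{n²} = (∏_{m=1}^∞ (1 − q^m)/(1 + q^m)) · ∑_{k=0}^∞ C_k(q)·x^{2k} holds, where both sides converge absolutely. -/

import Mathlib

/-- MacMahon's odd generalized sum-of-divisors function `C_k(q)`, defined as the sum over all
strictly increasing `k`-tuples of positive integers. -/
noncomputable def macC (k : ℕ) (q : ℂ) : ℂ :=
  ∑' m : {m : Fin k → ℕ // StrictMono m ∧ ∀ i, 0 < m i},
    q ^ (∑ i, (2 * m.1 i - 1)) / ∏ i, (1 - q ^ (2 * m.1 i - 1)) ^ 2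

/-!
Expanding a product over the sizes of the finite subsets that contribute to it,
`∑ₖ C_k(q) x^(2k) = ∏ₘ (1 + x² aₘ / (1 - aₘ)²)` with `aₘ = q^(2m+1)`. Write `x = z + z⁻¹`, so that
`2 T_{2n}(x/2) = z^(2n) + z^(-2n)` and `(1 - a)² + x² a = (1 + z² a) (1 + z⁻² a)`. Up to Euler
products, the identity is then Jacobi's triple product
`∑ₙ q^(n²) w^n = ∏ₘ (1 - q^(2m+2)) (1 + w q^(2m+1)) (1 + w⁻¹ q^(2m+1))` at `w = z²`, which is the
limit of a finite identity whose coefficients are Gaussian binomial coefficients.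
-/

open Filter Finset Topology

section GaussBinom

/-- The Gaussian binomial coefficient `[n, k]_q`, defined by the `q`-Pascal recursion, so that it
makes sense for every `q` in a semiring and vanishes for `n < k`. It provides the coefficients of
the finite form of the Jacobi triple product. -/
def gaussBinom {R : Type*} [Semiring R] (q : R) : ℕ → ℕ → R
  | _, 0 => 1
  | 0, _ + 1 => 0
  | n + 1, k + 1 => gaussBinom q n k + q ^ (k + 1) * gaussBinom q n (k + 1)

/-- The `q`-Pochhammer symbol `(q; q)_n = (1 - q) (1 - q²) ⋯ (1 - qⁿ)`, the `q`-analogue of the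
factorial in the quotient formula for Gaussian binomial coefficients. -/
def qPochhammer {R : Type*} [CommRing R] (q : R) (n : ℕ) : R :=
  ∏ i ∈ range n, (1 - q ^ (i + 1))

section Semiring

variable {R : Type*} [Semiring R] (q : R)

@[simp]
lemma gaussBinom_zero_right (n : ℕ) : gaussBinom q n 0 = 1 := by
  cases n <;> rfl

lemma gaussBinom_succ_succ (n k : ℕ) :
    gaussBinom q (n + 1) (k + 1) = gaussBinom q n k + q ^ (k + 1) * gaussBinom q n (k + 1) :=
  rfl

lemma gaussBinom_eq_zero_of_lt {n k : ℕ} (h : n < k) : gaussBinom q n k = 0 := by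
  induction n generalizing k with
  | zero => obtain ⟨k, rfl⟩ := Nat.exists_eq_add_one.mpr h; rfl
  | succ n ih =>
    obtain ⟨k, rfl⟩ := Nat.exists_eq_add_one.mpr (Nat.zero_lt_of_lt h)
    rw [gaussBinom_succ_succ, ih (by lia), ih (by lia), mul_zero, add_zero]

@[simp]
lemma gaussBinom_self (n : ℕ) : gaussBinom q n n = 1 := by
  induction n with
  | zero => rfl
  | succ n ih => rw [gaussBinom_succ_succ, ih, gaussBinom_eq_zero_of_lt q n.lt_succ_self, mul_zero,
      add_zero]

end Semiring

section CommSemiring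

variable {R : Type*} [CommSemiring R] (q : R)

lemma gaussBinom_succ_succ' {n k : ℕ} (h : k ≤ n) :
    gaussBinom q (n + 1) (k + 1) = q ^ (n - k) * gaussBinom q n k + gaussBinom q n (k + 1) := by
  induction n generalizing k with
  | zero => obtain rfl := Nat.le_zero.mp h; simp [gaussBinom]
  | succ n ih =>
    obtain _ | k := k
    · have hrec : gaussBinom q (n + 1) 1 = q ^ n + gaussBinom q n 1 := by simpa using ih n.zero_le
      calc gaussBinom q (n + 2) 1
        _ = 1 + q * (q ^ n + gaussBinom q n 1) := by
          rw [gaussBinom_succ_succ, hrec, gaussBinom_zero_right, pow_one]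
        _ = q ^ (n + 1) + (1 + q * gaussBinom q n 1) := by ring
        _ = q ^ (n + 1 - 0) * gaussBinom q (n + 1) 0 + gaussBinom q (n + 1) 1 := by
          simp [gaussBinom_succ_succ]
    obtain rfl | hk := (Nat.le_of_succ_le_succ h).eq_or_lt
    · simp [gaussBinom_eq_zero_of_lt]
    have hpow : q ^ (k + 2) * q ^ (n - (k + 1)) = q ^ (n - k) * q ^ (k + 1) := by
      rw [← pow_add, ← pow_add, show k + 2 + (n - (k + 1)) = n - k + (k + 1) by lia]
    calc gaussBinom q (n + 2) (k + 2)
      _ = gaussBinom q (n + 1) (k + 1) + q ^ (k + 2) * gaussBinom q (n + 1) (k + 2) := rfl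
      _ = q ^ (n - k) * gaussBinom q n k + gaussBinom q n (k + 1) +
          q ^ (k + 2) * (q ^ (n - (k + 1)) * gaussBinom q n (k + 1) + gaussBinom q n (k + 2)) := by
        rw [ih hk.le, ih hk]
      _ = q ^ (n - k) * (gaussBinom q n k + q ^ (k + 1) * gaussBinom q n (k + 1)) +
          (gaussBinom q n (k + 1) + q ^ (k + 2) * gaussBinom q n (k + 2)) := by
        rw [mul_add, ← mul_assoc, hpow]
        ring
      _ = q ^ (n + 1 - (k + 1)) * gaussBinom q (n + 1) (k + 1) + gaussBinom q (n + 1) (k + 2) := by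
        rw [← gaussBinom_succ_succ, ← gaussBinom_succ_succ, Nat.add_sub_add_right]

/-- Both Pascal rules are summed against an arbitrary weight, so that multiplying a Gaussian
generating function by a linear factor only requires comparing exponents term by term. -/
lemma sum_gaussBinom_succ_mul (n : ℕ) (f : ℕ → R) :
    ∑ k ∈ range (n + 2), gaussBinom q (n + 1) k * f k =
      ∑ k ∈ range (n + 1), gaussBinom q n k * (f (k + 1) + q ^ k * f k) := by
  have hshift : ∑ k ∈ range (n + 1), gaussBinom q n k * (q ^ k * f k) =
      ∑ k ∈ range (n + 1), gaussBinom q n (k + 1) * (q ^ (k + 1) * f (k + 1)) + f 0 := by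
    have h := sum_range_succ (fun k ↦ gaussBinom q n k * (q ^ k * f k)) (n + 1)
    rw [gaussBinom_eq_zero_of_lt q n.lt_succ_self, zero_mul, add_zero, sum_range_succ'] at h
    simpa using h.symm
  simp only [mul_add, sum_add_distrib, hshift]
  rw [sum_range_succ', ← add_assoc, ← sum_add_distrib]
  simp only [gaussBinom_zero_right, one_mul, gaussBinom_succ_succ]
  congr 1
  exact sum_congr rfl fun k _ ↦ by ring

lemma sum_gaussBinom_succ_mul' (n : ℕ) (f : ℕ → R) :
    ∑ k ∈ range (n + 2), gaussBinom q (n + 1) k * f k =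
      ∑ k ∈ range (n + 1), gaussBinom q n k * (q ^ (n - k) * f (k + 1) + f k) := by
  have hshift : ∑ k ∈ range (n + 1), gaussBinom q n k * f k =
      ∑ k ∈ range (n + 1), gaussBinom q n (k + 1) * f (k + 1) + f 0 := by
    have h := sum_range_succ (fun k ↦ gaussBinom q n k * f k) (n + 1)
    rw [gaussBinom_eq_zero_of_lt q n.lt_succ_self, zero_mul, add_zero, sum_range_succ'] at h
    simpa using h.symm
  simp only [mul_add, sum_add_distrib, hshift]
  rw [sum_range_succ', ← add_assoc, ← sum_add_distrib, gaussBinom_zero_right, one_mul]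
  congr 1
  refine sum_congr rfl fun k hk ↦ ?_
  rw [gaussBinom_succ_succ' q (Nat.le_of_lt_succ (mem_range.mp hk))]
  ring

theorem prod_one_add_mul_prod_add_eq_sum_gaussBinom (z : R) (m n : ℕ) :
    (∏ i ∈ range m, (1 + z * q ^ (2 * i + 1))) * ∏ i ∈ range n, (z + q ^ (2 * i + 1)) =
      ∑ k ∈ range (m + n + 1),
        gaussBinom (q ^ 2) (m + n) k * (q ^ ((k : ℤ) - n).natAbs ^ 2 * z ^ k) := by
  induction m with
  | zero =>
    induction n with
    | zero => simp
    | succ n ih =>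
      rw [prod_range_succ, ← mul_assoc, ih, zero_add, zero_add, sum_gaussBinom_succ_mul, sum_mul]
      refine sum_congr rfl fun k _ ↦ ?_
      have hexp : ((k : ℤ) - n).natAbs ^ 2 + (2 * n + 1) =
          2 * k + ((k : ℤ) - (n + 1 : ℕ)).natAbs ^ 2 := by
        zify
        simp only [sq_abs]
        ring
      rw [show ((k + 1 : ℕ) : ℤ) - (n + 1 : ℕ) = k - n by push_cast; ring, ← pow_mul,
        ← mul_assoc (q ^ (2 * k)), ← pow_add, ← hexp]
      ring
  | succ m ih =>
    rw [prod_range_succ, mul_right_comm, ih, show m + 1 + n = m + n + 1 by ring,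
      sum_gaussBinom_succ_mul', sum_mul]
    refine sum_congr rfl fun k hk ↦ ?_
    have hk' : k ≤ m + n := Nat.le_of_lt_succ (mem_range.mp hk)
    have hexp : ((k : ℤ) - n).natAbs ^ 2 + (2 * m + 1) =
        2 * (m + n - k) + (((k + 1 : ℕ) : ℤ) - n).natAbs ^ 2 := by
      zify [hk']
      simp only [sq_abs]
      ring
    rw [← pow_mul, ← mul_assoc (q ^ (2 * (m + n - k))), ← pow_add, ← hexp]
    ring

end CommSemiring

lemma gaussBinom_add_mul_qPochhammer {R : Type*} [CommRing R] (q : R) (a b : ℕ) :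
    gaussBinom q (a + b) a * (qPochhammer q a * qPochhammer q b) = qPochhammer q (a + b) := by
  have succ (n : ℕ) : qPochhammer q (n + 1) = qPochhammer q n * (1 - q ^ (n + 1)) :=
    prod_range_succ _ _
  induction a generalizing b with
  | zero => simp [qPochhammer]
  | succ a iha =>
    induction b with
    | zero => simp [qPochhammer]
    | succ b ihb =>
      have ha := iha (b + 1)
      rw [← add_assoc, succ b] at ha
      rw [add_right_comm, succ a] at ihb
      rw [show a + 1 + (b + 1) = a + b + 1 + 1 by ring, gaussBinom_succ_succ, succ a, succ b,
        succ (a + b + 1)]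
      linear_combination (1 - q ^ (a + 1)) * ha + q ^ (a + 1) * (1 - q ^ (b + 1)) * ihb

theorem prod_one_add_mul_one_add_inv_mul_eq_sum_gaussBinom {K : Type*} [Field K] (q : K) {z : K}
    (hz : z ≠ 0) (N : ℕ) :
    ∏ i ∈ range N, (1 + z * q ^ (2 * i + 1)) * (1 + z⁻¹ * q ^ (2 * i + 1)) =
      ∑ n ∈ Icc (-N : ℤ) N,
        gaussBinom (q ^ 2) (2 * N) (N + n).toNat * (q ^ n.natAbs ^ 2 * z ^ n) := by
  have hinv (i : ℕ) : 1 + z⁻¹ * q ^ (2 * i + 1) = (z + q ^ (2 * i + 1)) * z⁻¹ := by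
    field_simp
  simp only [hinv, ← mul_assoc, prod_mul_distrib, prod_const, card_range]
  rw [prod_one_add_mul_prod_add_eq_sum_gaussBinom, ← two_mul, sum_mul]
  refine sum_nbij' (fun k ↦ (k : ℤ) - N) (fun n ↦ (N + n).toNat) ?_ ?_ ?_ ?_ fun k _ ↦ ?_
  · simp only [mem_range, mem_Icc]; lia
  · simp only [mem_range, mem_Icc]; lia
  · simp
  · simp only [mem_Icc]; lia
  · rw [add_sub_cancel, Int.toNat_natCast, zpow_sub₀ hz, zpow_natCast, zpow_natCast]
    ring

end GaussBinom

lemma injective_two_mul_add_one : Function.Injective fun m : ℕ ↦ 2 * m + 1 := fun _ _ h ↦ by lia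

section NormedField

variable {K : Type*} [NormedField K] {q : K}

lemma one_sub_pow_ne_zero (hq : ‖q‖ < 1) {n : ℕ} (hn : n ≠ 0) : 1 - q ^ n ≠ 0 := by
  refine sub_ne_zero.mpr fun h ↦ (pow_lt_one₀ (norm_nonneg q) hq hn).ne ?_
  rw [← norm_pow, ← h, norm_one]

lemma one_add_pow_ne_zero (hq : ‖q‖ < 1) {n : ℕ} (hn : n ≠ 0) : 1 + q ^ n ≠ 0 := by
  refine fun h ↦ (pow_lt_one₀ (norm_nonneg q) hq hn).ne ?_
  rw [← norm_pow, eq_neg_of_add_eq_zero_right h, norm_neg, norm_one]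

lemma qPochhammer_ne_zero (hq : ‖q‖ < 1) (n : ℕ) : qPochhammer q n ≠ 0 :=
  prod_ne_zero_iff.mpr fun i _ ↦ one_sub_pow_ne_zero hq i.succ_ne_zero

lemma gaussBinom_add_eq_div (hq : ‖q‖ < 1) (a b : ℕ) :
    gaussBinom q (a + b) a = qPochhammer q (a + b) / (qPochhammer q a * qPochhammer q b) :=
  eq_div_of_mul_eq (mul_ne_zero (qPochhammer_ne_zero hq a) (qPochhammer_ne_zero hq b))
    (gaussBinom_add_mul_qPochhammer q a b)

lemma summable_norm_mul_pow_comp (hq : ‖q‖ < 1) (c : K) {e : ℕ → ℕ} (he : e.Injective) :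
    Summable fun m ↦ ‖c * q ^ e m‖ := by
  simp only [norm_mul, norm_pow]
  exact ((summable_geometric_of_lt_one (norm_nonneg q) hq).comp_injective he).mul_left ‖c‖

lemma summable_norm_pow_sq_mul_pow (hq : ‖q‖ < 1) (z : K) :
    Summable fun n : ℕ ↦ ‖q ^ n ^ 2 * z ^ n‖ := by
  have hlim : Tendsto (fun n : ℕ ↦ ‖q‖ ^ n * ‖z‖) atTop (𝓝 0) := by
    simpa using (tendsto_pow_atTop_nhds_zero_of_lt_one (norm_nonneg q) hq).mul_const ‖z‖
  refine Summable.of_norm_bounded_eventually_nat summable_geometric_two ?_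
  filter_upwards [hlim.eventually_le_const (show (0 : ℝ) < 1 / 2 by norm_num)] with n hn
  calc ‖‖q ^ n ^ 2 * z ^ n‖‖ = (‖q‖ ^ n * ‖z‖) ^ n := by
        rw [norm_norm, norm_mul, norm_pow, norm_pow, mul_pow, ← pow_mul, sq]
    _ ≤ (1 / 2) ^ n := by gcongr

lemma summable_norm_pow_sq_mul_zpow (hq : ‖q‖ < 1) (z : K) :
    Summable fun n : ℤ ↦ ‖q ^ n.natAbs ^ 2 * z ^ n‖ := by
  refine .of_nat_of_neg ?_ ?_
  · simpa using summable_norm_pow_sq_mul_pow hq z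
  · simpa using summable_norm_pow_sq_mul_pow hq z⁻¹

lemma summable_norm_pow_odd_div_one_sub_sq (hq : ‖q‖ < 1) :
    Summable fun m : ℕ ↦ ‖q ^ (2 * m + 1) / (1 - q ^ (2 * m + 1)) ^ 2‖ := by
  have hpow : Summable fun m : ℕ ↦ ‖q ^ (2 * m + 1)‖ := by
    simpa using summable_norm_mul_pow_comp hq 1 injective_two_mul_add_one
  have hlim : Tendsto (fun m : ℕ ↦ ((1 - q ^ (2 * m + 1)) ^ 2)⁻¹) atTop (𝓝 1) := by
    have hpow₀ := (tendsto_pow_atTop_nhds_zero_of_norm_lt_one hq).comp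
      injective_two_mul_add_one.nat_tendsto_atTop
    simpa using ((hpow₀.const_sub 1).pow 2).inv₀ (by simp)
  simp only [div_eq_mul_inv, norm_mul _ (_)⁻¹]
  exact hpow.norm.mul_tendsto_const (Nat.cofinite_eq_atTop ▸ hlim.norm)

variable [CompleteSpace K]

lemma multipliable_one_add_mul_pow_comp (hq : ‖q‖ < 1) (c : K) {e : ℕ → ℕ} (he : e.Injective) :
    Multipliable fun m ↦ 1 + c * q ^ e m :=
  multipliable_one_add_of_summable (summable_norm_mul_pow_comp hq c he)

lemma multipliable_one_add_pow_comp (hq : ‖q‖ < 1) {e : ℕ → ℕ} (he : e.Injective) :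
    Multipliable fun m ↦ 1 + q ^ e m := by
  simpa using multipliable_one_add_mul_pow_comp hq 1 he

lemma multipliable_one_sub_pow_comp (hq : ‖q‖ < 1) {e : ℕ → ℕ} (he : e.Injective) :
    Multipliable fun m ↦ 1 - q ^ e m := by
  simpa [← sub_eq_add_neg] using multipliable_one_add_mul_pow_comp hq (-1) he

lemma tprod_one_sub_pow_succ_ne_zero (hq : ‖q‖ < 1) : ∏' m : ℕ, (1 - q ^ (m + 1)) ≠ 0 := by
  simpa [← sub_eq_add_neg] using tprod_one_add_ne_zero_of_summable
    (fun m ↦ by simpa [← sub_eq_add_neg] using one_sub_pow_ne_zero hq m.succ_ne_zero)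
    (summable_norm_mul_pow_comp hq (-1) (add_left_injective 1))

lemma tprod_one_add_pow_succ_ne_zero (hq : ‖q‖ < 1) : ∏' m : ℕ, (1 + q ^ (m + 1)) ≠ 0 := by
  simpa using tprod_one_add_ne_zero_of_summable
    (fun m ↦ by simpa using one_add_pow_ne_zero hq m.succ_ne_zero)
    (summable_norm_mul_pow_comp hq 1 (add_left_injective 1))

lemma tendsto_qPochhammer (hq : ‖q‖ < 1) :
    Tendsto (qPochhammer q) atTop (𝓝 (∏' m : ℕ, (1 - q ^ (m + 1)))) :=
  (multipliable_one_sub_pow_comp hq (add_left_injective 1)).tendsto_prod_tprod_nat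

lemma tendsto_gaussBinom_add (hq : ‖q‖ < 1) {ι : Type*} {l : Filter ι} {a b : ι → ℕ}
    (ha : Tendsto a l atTop) (hb : Tendsto b l atTop) :
    Tendsto (fun i ↦ gaussBinom q (a i + b i) (a i)) l (𝓝 (∏' m : ℕ, (1 - q ^ (m + 1)))⁻¹) := by
  have hE := tprod_one_sub_pow_succ_ne_zero hq
  have hP := tendsto_qPochhammer hq
  have hlim := (hP.comp (ha.atTop_add_atTop hb)).div ((hP.comp ha).mul (hP.comp hb))
    (mul_ne_zero hE hE)
  rw [div_mul_cancel_left₀ hE] at hlim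
  exact hlim.congr fun i ↦ (gaussBinom_add_eq_div hq (a i) (b i)).symm

lemma exists_norm_gaussBinom_le (hq : ‖q‖ < 1) : ∃ C, ∀ n k, ‖gaussBinom q n k‖ ≤ C := by
  have hP := tendsto_qPochhammer hq
  obtain ⟨M, hM⟩ := (Metric.isBounded_range_of_tendsto _ hP).exists_norm_le
  obtain ⟨M', hM'⟩ := (Metric.isBounded_range_of_tendsto _
    (hP.inv₀ (tprod_one_sub_pow_succ_ne_zero hq))).exists_norm_le
  have hM (n : ℕ) : ‖qPochhammer q n‖ ≤ M := hM _ ⟨n, rfl⟩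
  have hM' (n : ℕ) : ‖(qPochhammer q n)⁻¹‖ ≤ M' := hM' _ ⟨n, rfl⟩
  have hM₀ : 0 ≤ M := (norm_nonneg _).trans (hM 0)
  have hM₀' : 0 ≤ M' := (norm_nonneg _).trans (hM' 0)
  refine ⟨M * (M' * M'), fun n k ↦ ?_⟩
  obtain hnk | hkn := lt_or_ge n k
  · rw [gaussBinom_eq_zero_of_lt q hnk, norm_zero]
    positivity
  · obtain ⟨b, rfl⟩ := Nat.exists_eq_add_of_le hkn
    rw [gaussBinom_add_eq_div hq, div_eq_mul_inv, mul_inv, norm_mul, norm_mul]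
    gcongr
    exacts [hM _, hM' _, hM' _]

lemma tendsto_gaussBinom_two_mul (hq : ‖q‖ < 1) (n : ℤ) :
    Tendsto (fun N : ℕ ↦ gaussBinom q (2 * N) (N + n).toNat) atTop
      (𝓝 (∏' m : ℕ, (1 - q ^ (m + 1)))⁻¹) := by
  have htop (r : ℤ) : Tendsto (fun N : ℕ ↦ (N + r).toNat) atTop atTop :=
    tendsto_atTop.mpr fun b ↦ by
      filter_upwards [eventually_ge_atTop (b + r.natAbs)] with N hN
      lia
  refine (tendsto_gaussBinom_add hq (htop n) (htop (-n))).congr' ?_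
  filter_upwards [eventually_ge_atTop n.natAbs] with N hN
  rw [show (N + n).toNat + (N + -n).toNat = 2 * N by lia]

theorem tprod_one_add_mul_pow_mul_one_add_inv_mul_pow (hq : ‖q‖ < 1) {z : K} (hz : z ≠ 0) :
    ∏' m : ℕ, (1 + z * q ^ (2 * m + 1)) * (1 + z⁻¹ * q ^ (2 * m + 1)) =
      (∏' m : ℕ, (1 - (q ^ 2) ^ (m + 1)))⁻¹ * ∑' n : ℤ, q ^ n.natAbs ^ 2 * z ^ n := by
  have hq2 : ‖q ^ 2‖ < 1 := norm_pow q 2 ▸ pow_lt_one₀ (norm_nonneg q) hq two_ne_zero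
  let t (n : ℤ) : K := q ^ n.natAbs ^ 2 * z ^ n
  let f (N : ℕ) : ℤ → K := (Icc (-N : ℤ) N : Set ℤ).indicator fun n ↦
    gaussBinom (q ^ 2) (2 * N) (N + n).toNat * t n
  have hpartial : Tendsto (fun N ↦ ∑' n, f N n) atTop
      (𝓝 (∏' m : ℕ, (1 + z * q ^ (2 * m + 1)) * (1 + z⁻¹ * q ^ (2 * m + 1)))) := by
    have hmul (c : K) := multipliable_one_add_mul_pow_comp hq c injective_two_mul_add_one
    refine Tendsto.congr (fun N ↦ ?_) ((hmul z).mul (hmul z⁻¹)).tendsto_prod_tprod_nat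
    rw [prod_one_add_mul_one_add_inv_mul_eq_sum_gaussBinom q hz, sum_eq_tsum_indicator]
  have hterm (n : ℤ) : Tendsto (f · n) atTop
      (𝓝 ((∏' m : ℕ, (1 - (q ^ 2) ^ (m + 1)))⁻¹ * t n)) := by
    refine ((tendsto_gaussBinom_two_mul hq2 n).mul_const (t n)).congr' ?_
    filter_upwards [eventually_ge_atTop n.natAbs] with N hN
    have hmem : n ∈ (Icc (-N : ℤ) N : Set ℤ) := mem_coe.mpr (mem_Icc.mpr (by lia))
    exact Eq.symm (Set.indicator_of_mem hmem _)
  obtain ⟨C, hC⟩ := exists_norm_gaussBinom_le hq2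
  have hbound (N : ℕ) (n : ℤ) : ‖f N n‖ ≤ C * ‖t n‖ := by
    refine (norm_indicator_le_norm_self _ n).trans ?_
    rw [norm_mul]
    gcongr
    exact hC _ _
  rw [← tsum_mul_left]
  exact tendsto_nhds_unique hpartial (tendsto_tsum_of_dominated_convergence
    ((summable_norm_pow_sq_mul_zpow hq z).mul_left C) hterm (.of_forall hbound))

theorem tprod_one_add_pow_mul_tprod_one_sub_pow_odd (hq : ‖q‖ < 1) :
    (∏' m : ℕ, (1 + q ^ (m + 1))) * ∏' m : ℕ, (1 - q ^ (2 * m + 1)) = 1 := by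
  have heven : (fun m ↦ 2 * m + 1 + 1 : ℕ → ℕ).Injective := fun a b h ↦ by lia
  have hparity := tprod_even_mul_odd (f := fun m ↦ 1 - q ^ (m + 1))
    (multipliable_one_sub_pow_comp hq injective_two_mul_add_one)
    (multipliable_one_sub_pow_comp hq heven)
  have hsq : (∏' m : ℕ, (1 - q ^ (m + 1))) * ∏' m : ℕ, (1 + q ^ (m + 1)) =
      ∏' m : ℕ, (1 - q ^ (2 * m + 1 + 1)) := by
    rw [← (multipliable_one_sub_pow_comp hq (add_left_injective 1)).tprod_mul
      (multipliable_one_add_pow_comp hq (add_left_injective 1))]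
    exact tprod_congr fun m ↦ by ring
  refine mul_left_cancel₀ (tprod_one_sub_pow_succ_ne_zero hq) ?_
  rw [← mul_assoc, hsq, mul_comm, hparity, mul_one]

theorem tprod_one_sub_pow_div_one_add_pow (hq : ‖q‖ < 1) :
    ∏' m : ℕ, (1 - q ^ (m + 1)) / (1 + q ^ (m + 1)) =
      (∏' m : ℕ, (1 - (q ^ 2) ^ (m + 1))) * (∏' m : ℕ, (1 - q ^ (2 * m + 1))) ^ 2 := by
  have hminus := multipliable_one_sub_pow_comp hq (add_left_injective 1)
  have hplus := multipliable_one_add_pow_comp hq (add_left_injective 1)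
  have hplus₀ := tprod_one_add_pow_succ_ne_zero hq
  have hsq : (∏' m : ℕ, (1 - q ^ (m + 1))) * ∏' m : ℕ, (1 + q ^ (m + 1)) =
      ∏' m : ℕ, (1 - (q ^ 2) ^ (m + 1)) := by
    rw [← hminus.tprod_mul hplus]
    exact tprod_congr fun m ↦ by ring
  rw [(hminus.hasProd.div₀ hplus.hasProd hplus₀).tprod_eq,
    div_eq_mul_inv, inv_eq_of_mul_eq_one_right (tprod_one_add_pow_mul_tprod_one_sub_pow_odd hq),
    ← hsq]
  linear_combination (-(∏' m : ℕ, (1 - q ^ (m + 1))) * ∏' m : ℕ, (1 - q ^ (2 * m + 1))) *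
    tprod_one_add_pow_mul_tprod_one_sub_pow_odd hq

theorem tsum_pow_sq_mul_zpow_eq_tprod (hq : ‖q‖ < 1) {z : K} (hz : z ≠ 0) :
    ∑' n : ℤ, q ^ n.natAbs ^ 2 * z ^ n =
      (∏' m : ℕ, (1 - q ^ (m + 1)) / (1 + q ^ (m + 1))) *
        ∏' m : ℕ, (1 + (z + 2 + z⁻¹) * (q ^ (2 * m + 1) / (1 - q ^ (2 * m + 1)) ^ 2)) := by
  have hq2 : ‖q ^ 2‖ < 1 := norm_pow q 2 ▸ pow_lt_one₀ (norm_nonneg q) hq two_ne_zero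
  have hsub := multipliable_one_sub_pow_comp hq injective_two_mul_add_one
  have hadd := multipliable_one_add_of_summable (f := fun m : ℕ ↦ (z + 2 + z⁻¹) *
    (q ^ (2 * m + 1) / (1 - q ^ (2 * m + 1)) ^ 2)) <| by
      simpa only [norm_mul] using (summable_norm_pow_odd_div_one_sub_sq hq).mul_left ‖z + 2 + z⁻¹‖
  have hfactor (m : ℕ) : (1 + z * q ^ (2 * m + 1)) * (1 + z⁻¹ * q ^ (2 * m + 1)) =
      (1 - q ^ (2 * m + 1)) ^ 2 *
        (1 + (z + 2 + z⁻¹) * (q ^ (2 * m + 1) / (1 - q ^ (2 * m + 1)) ^ 2)) := by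
    have := one_sub_pow_ne_zero hq (2 * m).succ_ne_zero
    field_simp
    ring
  have hjacobi := tprod_one_add_mul_pow_mul_one_add_inv_mul_pow hq hz
  rw [tprod_congr hfactor, (hsub.pow 2).tprod_mul hadd, hsub.tprod_pow,
    eq_inv_mul_iff_mul_eq₀ (tprod_one_sub_pow_succ_ne_zero hq2)] at hjacobi
  rw [tprod_one_sub_pow_div_one_add_pow hq, ← hjacobi, mul_assoc]

lemma hasSum_pow_sq_mul_pow_add_inv_pow (hq : ‖q‖ < 1) (z : K) :
    HasSum (fun n : ℕ ↦ q ^ (n + 1) ^ 2 * (z ^ (n + 1) + z⁻¹ ^ (n + 1)))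
      (∑' n : ℤ, q ^ n.natAbs ^ 2 * z ^ n - 1) := by
  have hfold := (summable_norm_pow_sq_mul_zpow hq z).of_norm.hasSum.nat_add_neg
  convert! (hasSum_nat_add_iff' 1).mpr hfold using 1
  · funext n
    rw [Int.natAbs_neg, Int.natAbs_natCast, zpow_neg, zpow_natCast, inv_pow, mul_add]
  · rw [sum_range_one, Nat.cast_zero, neg_zero, Int.natAbs_zero, zpow_zero]
    ring

end NormedField

section PowersetCard

theorem hasSum_tsum_powersetCard_mul_pow {R ι : Type*} [NormedCommRing R] [NormOneClass R]
    [CompleteSpace R] {f : ι → R} (hf : Summable fun i ↦ ‖f i‖) (y : R) :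
    HasSum (fun k : ℕ ↦ (∑' s : Set.powersetCard ι k, ∏ i ∈ s.1, f i) * y ^ k)
      (∏' i, (1 + y * f i)) := by
  have hyf : Summable fun i ↦ ‖y * f i‖ :=
    (hf.mul_left ‖y‖).of_nonneg_of_le (fun _ ↦ norm_nonneg _) fun _ ↦ norm_mul_le _ _
  have hsum (k : ℕ) : Summable fun s : Set.powersetCard ι k ↦ ∏ i ∈ s.1, f i :=
    (summable_finsetProd_of_summable_norm hf).subtype _
  rw [tprod_one_add (summable_finsetProd_of_summable_norm hyf)]
  refine ((Set.powersetCard.prodEquiv (α := ι)).hasSum_iff.mpr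
    (summable_finsetProd_of_summable_norm hyf).hasSum).sigma fun k ↦ ?_
  convert! (hsum k).hasSum.mul_right (y ^ k) using 2 with s
  simp [prod_mul_distrib, Set.powersetCard.card_eq, mul_comm]

/-- The shift by one between `Fin k ↪o ℕ` and tuples of positive integers. -/
def orderEmbEquivPosStrictMono (k : ℕ) :
    (Fin k ↪o ℕ) ≃ {m : Fin k → ℕ // StrictMono m ∧ ∀ i, 0 < m i} where
  toFun f := ⟨fun i ↦ f i + 1, fun _ _ h ↦ Nat.succ_lt_succ (f.strictMono h),
    fun _ ↦ Nat.succ_pos _⟩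
  invFun m := .ofStrictMono (fun i ↦ m.1 i - 1) fun i _ h ↦
    Nat.sub_lt_sub_right (m.2.2 i) (m.2.1 h)
  left_inv f := by ext i; simp
  right_inv m := Subtype.ext (funext fun i ↦ Nat.sub_add_cancel (m.2.2 i))

lemma macC_eq_tsum_powersetCard (k : ℕ) (q : ℂ) :
    macC k q = ∑' s : Set.powersetCard ℕ k,
      ∏ m ∈ s.1, q ^ (2 * m + 1) / (1 - q ^ (2 * m + 1)) ^ 2 := by
  rw [macC, ← (orderEmbEquivPosStrictMono k).tsum_eq,
    ← (Set.powersetCard.ofFinEmbEquiv (I := ℕ)).symm.tsum_eq]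
  refine tsum_congr fun s ↦ ?_
  conv_rhs => rw [← map_orderEmbOfFin_univ s.1 s.2, prod_map]
  rw [prod_div_distrib, prod_pow_eq_pow_sum]
  rfl

theorem hasSum_macC_mul_pow {q : ℂ} (hq : ‖q‖ < 1) (x : ℂ) :
    HasSum (fun k ↦ macC k q * x ^ (2 * k))
      (∏' m : ℕ, (1 + x ^ 2 * (q ^ (2 * m + 1) / (1 - q ^ (2 * m + 1)) ^ 2))) := by
  simp only [macC_eq_tsum_powersetCard, pow_mul]
  exact hasSum_tsum_powersetCard_mul_pow
    (f := fun m : ℕ ↦ q ^ (2 * m + 1) / (1 - q ^ (2 * m + 1)) ^ 2)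
    (summable_norm_pow_odd_div_one_sub_sq hq) (x ^ 2)

end PowersetCard

lemma exists_two_mul_eval_T_half_eq (x : ℂ) :
    ∃ z ≠ 0, ∀ n : ℤ, 2 * (Polynomial.Chebyshev.T ℂ n).eval (x / 2) = z ^ n + z⁻¹ ^ n := by
  obtain ⟨θ, hθ⟩ := Complex.cos_surjective (x / 2)
  refine ⟨Complex.exp (θ * Complex.I), Complex.exp_ne_zero _, fun n ↦ ?_⟩
  rw [← hθ, Polynomial.Chebyshev.T_complex_cos, Complex.two_cos, ← Complex.exp_neg,
    ← Complex.exp_int_mul, ← Complex.exp_int_mul]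
  ring_nf

theorem stmt1 (q x : ℂ) (hq : ‖q‖ < 1) :
    Summable (fun n : ℕ =>
      (Polynomial.Chebyshev.T ℂ (2 * ((n : ℤ) + 1))).eval (x / 2) * q ^ ((n + 1) ^ 2)) ∧
    Summable (fun k : ℕ => macC k q * x ^ (2 * k)) ∧
    1 + 2 * ∑' n : ℕ,
        (Polynomial.Chebyshev.T ℂ (2 * ((n : ℤ) + 1))).eval (x / 2) * q ^ ((n + 1) ^ 2) =
      (∏' m : ℕ, (1 - q ^ (m + 1)) / (1 + q ^ (m + 1))) *
        ∑' k : ℕ, macC k q * x ^ (2 * k) := by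
  obtain ⟨z, hz, hcheb⟩ := exists_two_mul_eval_T_half_eq x
  have hmac := hasSum_macC_mul_pow hq x
  have hx : x = z + z⁻¹ := by simpa [mul_div_cancel₀] using hcheb 1
  have hx2 : x ^ 2 = z ^ 2 + 2 + (z ^ 2)⁻¹ := by rw [hx]; field_simp; ring
  have hterm (n : ℕ) : (Polynomial.Chebyshev.T ℂ (2 * ((n : ℤ) + 1))).eval (x / 2) *
      q ^ ((n + 1) ^ 2) = q ^ (n + 1) ^ 2 * ((z ^ 2) ^ (n + 1) + (z ^ 2)⁻¹ ^ (n + 1)) / 2 := by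
    have h := hcheb (2 * (n + 1) : ℕ)
    rw [zpow_natCast, zpow_natCast, pow_mul, pow_mul, inv_pow z] at h
    push_cast at h
    rw [← h]
    ring
  have htheta := (hasSum_pow_sq_mul_pow_add_inv_pow hq (z ^ 2)).div_const 2
  rw [tsum_pow_sq_mul_zpow_eq_tprod hq (pow_ne_zero 2 hz), ← hx2] at htheta
  simp only [hterm]
  refine ⟨htheta.summable, hmac.summable, ?_⟩
  rw [htheta.tsum_eq, hmac.tsum_eq]
  ring
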